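/- arXiv:2412.18959 — 2 statements merged into one kernel-verified Lean document; each statement's English description precedes it below -/
import Mathlib

section
/- Let (B'' | A'') be an irreducible skew-symmetric augmented matrix of dimension m, and let (B_0 | A_0), (B_1 | A_1), ..., (B_n | A_n) be a finite chain of skew-symmetric augmented matrices with (B_0 | A_0) = (B'' | A'') and such that each (B_{i+1} | A_{i+1}) is obtained from (B_i | A_i) by a single permutation, reduction of type 1 or 2, or extension of type 1 or 2. Then every (B_i | A_i) has dimension at least m, and whenever (B_i | A_i) has dimension exactly m it is a permutation of (B'' | A''). -/
/-- A skew-symmetric augmented matrix `(B ∣ A)` of dimension `n`: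
`B` is an `n × n` integer matrix with `Bᵀ = -B` and `A` is an integer
column vector of length `n`.  Dimension `0` gives the empty matrix. -/
structure SkewAug where
  n : ℕ
  B : Matrix (Fin n) (Fin n) ℤ
  A : Fin n → ℤ
  skew : B.transpose = -B

namespace SkewAug

/-- The permutation matrix of a permutation `σ` of `Fin n`. -/
def permMatrixOf {n : ℕ} (σ : Equiv.Perm (Fin n)) : Matrix (Fin n) (Fin n) ℤ :=
  Matrix.of fun i j => if σ j = i then 1 else 0

/-- `P` is a permutation matrix. -/
def IsPermMatrix {n : ℕ} (P : Matrix (Fin n) (Fin n) ℤ) : Prop :=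
  ∃ σ : Equiv.Perm (Fin n), P = permMatrixOf σ

/-- `PermStep M N` : `N` is a permutation of `M`, i.e. there is a permutation
matrix `P` with `N = (P M.B Pᵀ ∣ P M.A)`. -/
def PermStep (M N : SkewAug) : Prop :=
  ∃ (h : M.n = N.n) (P : Matrix (Fin N.n) (Fin N.n) ℤ),
    IsPermMatrix P ∧
    N.B = P * (Matrix.reindex (finCongr h) (finCongr h) M.B) * P.transpose ∧
    N.A = P.mulVec (fun i => M.A (Fin.cast h.symm i))

/-- `DeleteAt M S N` : `N` is obtained from `M` by deleting the rows and
columns of `M.B` indexed by `S` and the entries of `M.A` indexed by `S`. -/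
def DeleteAt (M : SkewAug) (S : Set (Fin M.n)) (N : SkewAug) : Prop :=
  ∃ e : Fin N.n → Fin M.n, StrictMono e ∧ (∀ k, k ∈ Set.range e ↔ k ∉ S) ∧
    (∀ i j, N.B i j = M.B (e i) (e j)) ∧ (∀ i, N.A i = M.A (e i))

/-- The condition allowing a reduction of type 1 at index `j`:
`A j = 0` and the `j`-th column of `B` is the zero vector or equals `A`. -/
def Red1Cond (M : SkewAug) (j : Fin M.n) : Prop :=
  M.A j = 0 ∧ ((∀ i, M.B i j = 0) ∨ (∀ i, M.B i j = M.A i))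

/-- The condition allowing a reduction of type 2 at distinct indices `r, t`:
`A r = -A t` and the sum of the `r`-th and `t`-th columns of `B` equals `A`. -/
def Red2Cond (M : SkewAug) (r t : Fin M.n) : Prop :=
  r ≠ t ∧ M.A r = -M.A t ∧ ∀ i, M.B i r + M.B i t = M.A i

/-- `N` is obtained from `M` by a reduction of type 1. -/
def Red1 (M N : SkewAug) : Prop :=
  ∃ j : Fin M.n, Red1Cond M j ∧ DeleteAt M {j} N

/-- `N` is obtained from `M` by a reduction of type 2. -/
def Red2 (M N : SkewAug) : Prop :=
  ∃ r t : Fin M.n, Red2Cond M r t ∧ DeleteAt M {r, t} N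

/-- A single move: a permutation, a reduction of type 1 or 2, or an
extension of type 1 or 2 (the inverse of a reduction). -/
def Move (M N : SkewAug) : Prop :=
  PermStep M N ∨ Red1 M N ∨ Red2 M N ∨ Red1 N M ∨ Red2 N M

/-- S-equivalence: `M` can be transformed into `N` by a finite sequence of
moves. -/
def SEquiv : SkewAug → SkewAug → Prop :=
  Relation.ReflTransGen Move

/-- A reduction of type 1 or type 2 can be applied to `M`. -/
def Reducible (M : SkewAug) : Prop :=
  (∃ j, Red1Cond M j) ∨ (∃ r t, Red2Cond M r t)

/-- `M` is irreducible: no reduction of type 1 or type 2 can be applied. -/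
def Irreducible (M : SkewAug) : Prop := ¬ Reducible M

/-- The empty skew-symmetric augmented matrix. -/
def empty : SkewAug := ⟨0, 0, 0, by simp⟩

/-- `M` is trivial if it is S-equivalent to the empty matrix. -/
def Trivial (M : SkewAug) : Prop := SEquiv M empty

end SkewAug

namespace SkewAug

/-- `K` is obtained from `N` by deleting `S`, up to relabelling. -/
def Sub (N K : SkewAug) (S : Set (Fin N.n)) : Prop :=
  ∃ e : Fin K.n → Fin N.n, Function.Injective e ∧ (∀ k, k ∈ Set.range e ↔ k ∉ S) ∧
    (∀ i j, K.B i j = N.B (e i) (e j)) ∧ (∀ i, K.A i = N.A (e i))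

def Iso (M N : SkewAug) : Prop := Sub M N ∅

def Cond (M : SkewAug) (S : Set (Fin M.n)) : Prop :=
  (∃ j, Red1Cond M j ∧ S = {j}) ∨ (∃ r t, Red2Cond M r t ∧ S = {r, t})

def RedG (M N : SkewAug) : Prop := ∃ S, Cond M S ∧ Sub M N S

inductive Reach (M : SkewAug) : SkewAug → Prop
  | base (N : SkewAug) : Iso M N → Reach M N
  | step (N N1 : SkewAug) : RedG N N1 → Reach M N1 → Reach M N

lemma skew_apply (M : SkewAug) (i j : Fin M.n) : M.B i j = - M.B j i := by
  have := congrFun (congrFun M.skew j) i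
  simpa using this

lemma conj_perm {n : ℕ} (σ : Equiv.Perm (Fin n)) (X : Matrix (Fin n) (Fin n) ℤ) (i j : Fin n) :
    (permMatrixOf σ * X * (permMatrixOf σ).transpose) i j = X (σ.symm i) (σ.symm j) := by
  have h : ∀ a b : Fin n, (σ a = b) ↔ (a = σ.symm b) := fun a b => by
    rw [Equiv.eq_symm_apply]
  simp [Matrix.mul_apply, permMatrixOf, h]

lemma perm_mulVec {n : ℕ} (σ : Equiv.Perm (Fin n)) (X : Fin n → ℤ) (i : Fin n) :
    (permMatrixOf σ).mulVec X i = X (σ.symm i) := by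
  have h : ∀ a b : Fin n, (σ a = b) ↔ (a = σ.symm b) := fun a b => by
    rw [Equiv.eq_symm_apply]
  simp [Matrix.mulVec, dotProduct, permMatrixOf, h]

lemma iso_of_permStep {M N : SkewAug} (h : PermStep M N) : Iso M N := by
  obtain ⟨h, P, ⟨σ, rfl⟩, hB, hA⟩ := h
  refine ⟨fun i => Fin.cast h.symm (σ.symm i), ?_, ?_, ?_, ?_⟩
  · intro a b hab
    simpa using hab
  · intro k
    simp only [Set.mem_empty_iff_false, not_false_eq_true, iff_true]
    exact ⟨σ (Fin.cast h k), by simp⟩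
  · intro i j
    rw [hB, conj_perm]
    simp
  · intro i
    rw [hA, perm_mulVec]

lemma permStep_of_iso {M N : SkewAug} (h : Iso M N) : PermStep M N := by
  obtain ⟨e, hinj, hr, hB, hA⟩ := h
  have hs : Function.Surjective e := fun k => (hr k).2 (by simp)
  have hn : M.n = N.n := by
    simpa using (Fintype.card_of_bijective ⟨hinj, hs⟩).symm
  let E : Equiv.Perm (Fin N.n) := (Equiv.ofBijective e ⟨hinj, hs⟩).trans (finCongr hn)
  have hE : ∀ i, Fin.cast hn.symm (E i) = e i := fun i => by simp [E]; rfl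
  refine ⟨hn, permMatrixOf E.symm, ⟨_, rfl⟩, ?_, ?_⟩
  · ext i j
    rw [conj_perm]
    simp [hB, hE]
  · ext i
    rw [perm_mulVec]
    simp [hA, hE]

lemma Iso.refl (M : SkewAug) : Iso M M :=
  ⟨id, Function.injective_id, by simp, by simp, by simp⟩

/-- Factorization of two deletions. -/
lemma factor {N N1 K : SkewAug} {S T : Set (Fin N.n)} (h1 : Sub N N1 S) (h : Sub N K T)
    (hST : S ⊆ T) : ∃ e1 : Fin N1.n → Fin N.n, Function.Injective e1 ∧
      (∀ k, k ∈ Set.range e1 ↔ k ∉ S) ∧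
      (∀ i j, N1.B i j = N.B (e1 i) (e1 j)) ∧ (∀ i, N1.A i = N.A (e1 i)) ∧
      Sub N1 K (e1 ⁻¹' T) := by
  obtain ⟨e1, i1, r1, B1, A1⟩ := h1
  obtain ⟨e, i2, r2, B2, A2⟩ := h
  refine ⟨e1, i1, r1, B1, A1, ?_⟩
  have : ∀ k, ∃ d, e1 d = e k := fun k => (r1 _).2 fun hk => (r2 (e k)).1 ⟨k, rfl⟩ (hST hk)
  choose d hd using this
  refine ⟨d, ?_, ?_, ?_, ?_⟩
  · intro a b hab
    apply i2
    rw [← hd, ← hd, hab]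
  · intro k
    rw [Set.mem_preimage, ← r2]
    constructor
    · rintro ⟨x, rfl⟩
      exact ⟨x, (hd x).symm⟩
    · rintro ⟨x, hx⟩
      exact ⟨x, i1 (by rw [hd, hx])⟩
  · intro i j
    rw [B1, hd, hd, B2]
  · intro i
    rw [A1, hd, A2]

lemma iso_of_sub {N N1 N2 : SkewAug} {S : Set (Fin N.n)} (h1 : Sub N N1 S) (h2 : Sub N N2 S) :
    Iso N1 N2 := by
  obtain ⟨e1, i1, r1, B1, A1, h⟩ := factor h1 h2 subset_rfl
  have : e1 ⁻¹' S = ∅ := by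
    ext k
    simpa using (r1 (e1 k)).1 ⟨k, rfl⟩
  rwa [this] at h

lemma Iso.symm {M N : SkewAug} (h : Iso M N) : Iso N M := iso_of_sub h (Iso.refl M)

lemma Sub.trans {M N K : SkewAug} {S : Set (Fin M.n)} (h : Sub M N S) (h' : Iso N K) :
    Sub M K S := by
  obtain ⟨e1, i1, r1, B1, A1⟩ := h
  obtain ⟨e, i2, r2, B2, A2⟩ := h'
  refine ⟨e1 ∘ e, i1.comp i2, ?_, ?_, ?_⟩
  · intro k
    rw [← r1]
    constructor
    · rintro ⟨x, rfl⟩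
      exact ⟨e x, rfl⟩
    · rintro ⟨x, rfl⟩
      obtain ⟨y, rfl⟩ := (r2 x).2 (by simp)
      exact ⟨y, rfl⟩
  · intro i j
    rw [B2, B1]; rfl
  · intro i
    rw [A2, A1]; rfl

lemma factor_red {N N1 K : SkewAug} {S T : Set (Fin N.n)} (h1 : Sub N N1 S)
    (h : Sub N K (S ∪ T)) (hd : Disjoint S T) (hT : Cond N T) : RedG N1 K := by
  obtain ⟨e1, i1, r1, B1, A1, h⟩ := factor h1 h Set.subset_union_left
  refine ⟨_, ?_, h⟩
  have hpre : e1 ⁻¹' (S ∪ T) = e1 ⁻¹' T := by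
    ext k
    have := (r1 (e1 k)).1 ⟨k, rfl⟩
    simp [this]
  rw [hpre]
  have hex : ∀ x ∈ T, ∃ y, e1 y = x := fun x hx =>
    (r1 x).2 fun hS => Set.disjoint_left.1 hd hS hx
  rcases hT with ⟨j, ⟨hA, hB⟩, rfl⟩ | ⟨r, t, ⟨hne, hA, hB⟩, rfl⟩
  · obtain ⟨j, rfl⟩ := hex j (by simp)
    refine Or.inl ⟨j, ⟨by rw [A1, hA], ?_⟩, ?_⟩
    · rcases hB with hB | hB
      · exact Or.inl fun i => by rw [B1, hB]
      · exact Or.inr fun i => by rw [B1, hB, A1]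
    · ext k
      simp [i1.eq_iff]
  · obtain ⟨r, rfl⟩ := hex r (by simp)
    obtain ⟨t, rfl⟩ := hex t (by simp)
    refine Or.inr ⟨r, t, ⟨fun h => hne (by rw [h]), by rw [A1, A1, hA], ?_⟩, ?_⟩
    · intro i
      rw [B1, B1, hB, A1]
    · ext k
      simp [i1.eq_iff]

lemma exists_sub (N : SkewAug) (S : Set (Fin N.n)) : ∃ K, Sub N K S := by
  classical
  let f : Fin (Fintype.card {k // k ∉ S}) ≃ {k // k ∉ S} := (Fintype.equivFin _).symm
  refine ⟨⟨Fintype.card {k // k ∉ S}, fun i j => N.B (f i) (f j), fun i => N.A (f i), ?_⟩,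
    fun i => (f i).1, ?_, ?_, fun _ _ => rfl, fun _ => rfl⟩
  · ext i j
    exact skew_apply N _ _
  · exact Subtype.val_injective.comp f.injective
  · intro k
    constructor
    · rintro ⟨x, rfl⟩
      exact (f x).2
    · intro hk
      exact ⟨f.symm ⟨k, hk⟩, by simp⟩

lemma redG_iso_left {N N' K : SkewAug} (h : Iso N N') (hr : RedG N K) : RedG N' K := by
  obtain ⟨S, hS, hK⟩ := hr
  exact factor_red h (by simpa using hK) (by simp) hS

lemma Reach.iso {M N N' : SkewAug} (h : Reach M N) (hi : Iso N N') : Reach M N' := by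
  cases h with
  | base _ h => exact .base _ (Sub.trans h hi)
  | step _ N1 h h' => exact .step _ N1 (redG_iso_left hi h) h'

lemma not_redG {M N : SkewAug} (hM : Irreducible M) : ¬ RedG M N := by
  rintro ⟨S, ⟨j, hj, -⟩ | ⟨r, t, h, -⟩, -⟩
  · exact hM (Or.inl ⟨j, hj⟩)
  · exact hM (Or.inr ⟨r, t, h⟩)

lemma Red2Cond.symm {M : SkewAug} {r t : Fin M.n} (h : Red2Cond M r t) : Red2Cond M t r :=
  ⟨h.1.symm, by rw [h.2.1, neg_neg], fun i => by rw [add_comm, h.2.2]⟩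

lemma Red2Cond.other {M : SkewAug} {r t : Fin M.n} (h : Red2Cond M r t) (hr : Red1Cond M r) :
    Red1Cond M t := by
  obtain ⟨_, hA, hB⟩ := h
  obtain ⟨h0, h1⟩ := hr
  refine ⟨by omega, ?_⟩
  rcases h1 with h1 | h1
  · exact Or.inr fun i => by have := hB i; have := h1 i; omega
  · exact Or.inl fun i => by have := hB i; have := h1 i; omega

def Joinable (N1 N2 : SkewAug) : Prop :=
  Iso N1 N2 ∨ RedG N1 N2 ∨ RedG N2 N1 ∨ ∃ K, RedG N1 K ∧ RedG N2 K

lemma Joinable.symm {N1 N2 : SkewAug} (h : Joinable N1 N2) : Joinable N2 N1 := by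
  rcases h with h | h | h | ⟨K, h, h'⟩
  · exact Or.inl h.symm
  · exact Or.inr (Or.inr (Or.inl h))
  · exact Or.inr (Or.inl h)
  · exact Or.inr (Or.inr (Or.inr ⟨K, h', h⟩))

lemma join_disjoint {N N1 N2 : SkewAug} {S T : Set (Fin N.n)} (h1 : Sub N N1 S)
    (h2 : Sub N N2 T) (hS : Cond N S) (hT : Cond N T) (hd : Disjoint S T) :
    Joinable N1 N2 := by
  obtain ⟨K, hK⟩ := exists_sub N (S ∪ T)
  exact Or.inr (Or.inr (Or.inr ⟨K, factor_red h1 hK hd hT,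
    factor_red h2 (by rwa [Set.union_comm]) hd.symm hS⟩))

lemma join_one_two' {N N1 N2 : SkewAug} {j t : Fin N.n} (hj : Red1Cond N j)
    (h2 : Red2Cond N j t) (s1 : Sub N N1 {j}) (s2 : Sub N N2 {j, t}) : Joinable N1 N2 := by
  refine Or.inr (Or.inl (factor_red s1 (T := {t}) ?_ ?_ ?_))
  · rwa [Set.singleton_union]
  · simpa using h2.1
  · exact Or.inl ⟨t, h2.other hj, rfl⟩

lemma join_one_two {N N1 N2 : SkewAug} {j r t : Fin N.n} (hj : Red1Cond N j)
    (h2 : Red2Cond N r t) (s1 : Sub N N1 {j}) (s2 : Sub N N2 {r, t}) : Joinable N1 N2 := by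
  by_cases h : j = r
  · subst h
    exact join_one_two' hj h2 s1 s2
  by_cases h' : j = t
  · subst h'
    rw [Set.pair_comm] at s2
    exact join_one_two' hj h2.symm s1 s2
  exact join_disjoint s1 s2 (Or.inl ⟨_, hj, rfl⟩) (Or.inr ⟨_, _, h2, rfl⟩) (by simp [h, h'])

lemma join_two_two' {N N1 N2 : SkewAug} {r t t' : Fin N.n} (h1 : Red2Cond N r t)
    (h2 : Red2Cond N r t') (s1 : Sub N N1 {r, t}) (s2 : Sub N N2 {r, t'}) :
    Joinable N1 N2 := by
  have hA : N.A t = N.A t' := by have := h1.2.1; have := h2.2.1; omega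
  have hB : ∀ i, N.B i t = N.B i t' := fun i => by
    have := h1.2.2 i; have := h2.2.2 i; omega
  have hB' : ∀ i, N.B t i = N.B t' i := fun i => by
    rw [skew_apply N t, skew_apply N t', hB]
  have sA : ∀ i, N.A (Equiv.swap t t' i) = N.A i := fun i => by
    rw [Equiv.swap_apply_def]
    split_ifs with a b
    · rw [a, hA]
    · rw [b, hA]
    · rfl
  have sB : ∀ i j, N.B i (Equiv.swap t t' j) = N.B i j := fun i j => by
    rw [Equiv.swap_apply_def]
    split_ifs with a b
    · rw [a, hB]
    · rw [b, hB]
    · rfl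
  have sB' : ∀ i j, N.B (Equiv.swap t t' i) j = N.B i j := fun i j => by
    rw [Equiv.swap_apply_def]
    split_ifs with a b
    · rw [a, hB']
    · rw [b, hB']
    · rfl
  refine Or.inl (iso_of_sub s1 ?_)
  obtain ⟨e, i2, r2, B2, A2⟩ := s2
  refine ⟨fun i => Equiv.swap t t' (e i), (Equiv.injective _).comp i2, ?_, ?_, ?_⟩
  · intro k
    have : k ∈ Set.range (fun i => Equiv.swap t t' (e i)) ↔ Equiv.swap t t' k ∈ Set.range e := by
      constructor
      · rintro ⟨x, rfl⟩
        exact ⟨x, by simp⟩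
      · rintro ⟨x, hx⟩
        exact ⟨x, by simp [hx]⟩
    rw [this, r2]
    have a := h1.1
    have b := h2.1
    simp only [Set.mem_insert_iff, Set.mem_singleton_iff]
    rw [Equiv.swap_apply_def]
    split_ifs <;> grind
  · intro i j
    rw [sB, sB', B2]
  · intro i
    rw [sA, A2]

lemma join_two_two {N N1 N2 : SkewAug} {r t r' t' : Fin N.n} (h1 : Red2Cond N r t)
    (h2 : Red2Cond N r' t') (s1 : Sub N N1 {r, t}) (s2 : Sub N N2 {r', t'}) :
    Joinable N1 N2 := by
  have s1' := s1
  have s2' := s2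
  rw [Set.pair_comm] at s1' s2'
  by_cases a : r = r'
  · subst a
    exact join_two_two' h1 h2 s1 s2
  by_cases b : r = t'
  · subst b
    exact join_two_two' h1 h2.symm s1 s2'
  by_cases c : t = r'
  · subst c
    exact join_two_two' h1.symm h2 s1' s2
  by_cases d : t = t'
  · subst d
    exact join_two_two' h1.symm h2.symm s1' s2'
  refine join_disjoint s1 s2 (Or.inr ⟨_, _, h1, rfl⟩) (Or.inr ⟨_, _, h2, rfl⟩) ?_
  rw [Set.disjoint_left]
  simp only [Set.mem_insert_iff, Set.mem_singleton_iff]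
  grind

lemma confluence {N N1 N2 : SkewAug} (h1 : RedG N N1) (h2 : RedG N N2) : Joinable N1 N2 := by
  obtain ⟨S, hS, s1⟩ := h1
  obtain ⟨T, hT, s2⟩ := h2
  have hS' := hS
  have hT' := hT
  rcases hS' with ⟨j, hj, rfl⟩ | ⟨r, t, h, rfl⟩ <;>
  rcases hT' with ⟨j', hj', rfl⟩ | ⟨r', t', h', rfl⟩
  · by_cases e : j = j'
    · subst e
      exact Or.inl (iso_of_sub s1 s2)
    · exact join_disjoint s1 s2 hS hT (by simpa using e)
  · exact join_one_two hj h' s1 s2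
  · exact (join_one_two hj' h s2 s1).symm
  · exact join_two_two h h' s1 s2

lemma Reach.red {M N : SkewAug} (hM : Irreducible M) (h : Reach M N) :
    ∀ N', RedG N N' → Reach M N' := by
  induction h with
  | base N h => exact fun N' h' => absurd (redG_iso_left h.symm h') (not_redG hM)
  | step N N1 h h1 ih =>
    intro N' h'
    rcases confluence h h' with c | c | c | ⟨K, c, c'⟩
    · exact h1.iso c
    · exact ih _ c
    · exact .step _ _ c h1
    · exact .step _ _ c' (ih _ c)

lemma RedG.lt {N N' : SkewAug} (h : RedG N N') : N'.n < N.n := by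
  obtain ⟨S, hS, e, hi, hr, -⟩ := h
  have : ∃ x, x ∈ S := by
    rcases hS with ⟨j, hj, rfl⟩ | ⟨r, t, h, rfl⟩
    · exact ⟨j, by simp⟩
    · exact ⟨r, by simp⟩
  obtain ⟨x, hx⟩ := this
  have := Fintype.card_lt_of_injective_not_surjective e hi fun hs => (hr x).1 (hs x) hx
  simpa using this

lemma Reach.dim {M N : SkewAug} (h : Reach M N) :
    M.n ≤ N.n ∧ (N.n = M.n → PermStep M N) := by
  induction h with
  | base N h =>
    have := permStep_of_iso h
    exact ⟨this.1.le, fun _ => this⟩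
  | step N N1 h h1 ih =>
    have := h.lt
    exact ⟨by omega, fun h => by omega⟩

lemma Red1.redG {M N : SkewAug} (h : Red1 M N) : RedG M N := by
  obtain ⟨j, hj, e, he, h⟩ := h
  exact ⟨{j}, Or.inl ⟨j, hj, rfl⟩, e, he.injective, h⟩

lemma Red2.redG {M N : SkewAug} (h : Red2 M N) : RedG M N := by
  obtain ⟨r, t, hj, e, he, h⟩ := h
  exact ⟨{r, t}, Or.inr ⟨r, t, hj, rfl⟩, e, he.injective, h⟩

lemma Reach.move {M N N' : SkewAug} (hM : Irreducible M) (h : Reach M N) (h' : Move N N') :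
    Reach M N' := by
  rcases h' with h' | h' | h' | h' | h'
  · exact h.iso (iso_of_permStep h')
  · exact h.red hM _ h'.redG
  · exact h.red hM _ h'.redG
  · exact .step _ _ h'.redG h
  · exact .step _ _ h'.redG h

end SkewAug

/-- If `(B'' ∣ A'')` is an irreducible skew-symmetric augmented
matrix of dimension `m` and `(B_0 ∣ A_0), …, (B_n ∣ A_n)` is a chain starting
at `(B'' ∣ A'')` in which each step is a permutation, a reduction of type 1
or 2, or an extension of type 1 or 2, then each `(B_i ∣ A_i)` has dimension
at least `m`, and whenever its dimension is exactly `m` it is a permutation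
of `(B'' ∣ A'')`. -/
theorem chain_dim_ge_of_irreducible (M : SkewAug) (hM : SkewAug.Irreducible M)
    (f : ℕ → SkewAug) (n : ℕ) (h0 : f 0 = M)
    (hstep : ∀ i, i < n → SkewAug.Move (f i) (f (i + 1))) :
    ∀ i, i ≤ n → M.n ≤ (f i).n ∧ ((f i).n = M.n → SkewAug.PermStep M (f i)) := by
  intro i hi
  apply SkewAug.Reach.dim
  induction i with
  | zero =>
    rw [h0]
    exact .base _ (SkewAug.Iso.refl M)
  | succ k ih => exact (ih (by omega)).move hM (hstep k (by omega))
end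

section
/- An irreducible skew-symmetric augmented matrix of dimension n ≥ 1 is not trivial, i.e., it is not S-equivalent to the empty matrix. -/
namespace SkewAug

/-- `D` can be deleted from the submatrix indexed by `S`. -/
def RedSet {ι : Type} [DecidableEq ι] (B : ι → ι → ℤ) (A : ι → ℤ) (S D : Finset ι) : Prop :=
  (∃ j, D = {j} ∧ j ∈ S ∧ A j = 0 ∧ ((∀ i ∈ S, B i j = 0) ∨ (∀ i ∈ S, B i j = A i))) ∨
  (∃ r t, D = {r, t} ∧ r ∈ S ∧ t ∈ S ∧ r ≠ t ∧ A r = -A t ∧ ∀ i ∈ S, B i r + B i t = A i)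

/-- The submatrix indexed by `S` reduces to the empty matrix. -/
inductive RTriv {ι : Type} [DecidableEq ι] (B : ι → ι → ℤ) (A : ι → ℤ) : Finset ι → Prop
  | nil : RTriv B A ∅
  | step (S D : Finset ι) : RedSet B A S D → RTriv B A (S \ D) → RTriv B A S

lemma RedSet.mono {ι : Type} [DecidableEq ι] {B : ι → ι → ℤ} {A : ι → ℤ} {S D S' : Finset ι}
    (h : RedSet B A S D) (hS : S' ⊆ S) (hD : D ⊆ S') : RedSet B A S' D := by
  rcases h with ⟨j, rfl, hj, hA, h⟩ | ⟨r, t, rfl, hr, ht, hrt, hA, h⟩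
  · refine Or.inl ⟨j, rfl, hD (by simp), hA, ?_⟩
    rcases h with h | h
    · exact Or.inl fun i hi => h i (hS hi)
    · exact Or.inr fun i hi => h i (hS hi)
  · exact Or.inr ⟨r, t, rfl, hD (by simp), hD (by simp), hrt, hA, fun i hi => h i (hS hi)⟩

lemma RedSet.sub {ι : Type} [DecidableEq ι] {B : ι → ι → ℤ} {A : ι → ℤ} {S D : Finset ι}
    (h : RedSet B A S D) : D ⊆ S ∧ D.Nonempty := by
  rcases h with ⟨j, rfl, hj, hA, h⟩ | ⟨r, t, rfl, hr, ht, hrt, hA, h⟩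
  · simpa using hj
  · refine ⟨?_, by simp⟩
    intro x hx
    simp only [Finset.mem_insert, Finset.mem_singleton] at hx
    rcases hx with rfl | rfl <;> assumption

lemma RTriv.transfer {ι κ : Type} [DecidableEq ι] [DecidableEq κ]
    {B : ι → ι → ℤ} {A : ι → ℤ} {B' : κ → κ → ℤ} {A' : κ → ℤ} (e : ι → κ) {S : Finset ι}
    (h : RTriv B A S) (he : Set.InjOn e S)
    (hB : ∀ i ∈ S, ∀ j ∈ S, B' (e i) (e j) = B i j) (hA : ∀ i ∈ S, A' (e i) = A i) :
    RTriv B' A' (S.image e) := by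
  induction h with
  | nil => simpa using RTriv.nil
  | step S D hr h ih =>
    have hsub : S \ D ⊆ S := Finset.sdiff_subset
    have hDS := hr.sub.1
    have ih := ih (he.mono (by exact_mod_cast hsub))
      (fun i hi j hj => hB i (hsub hi) j (hsub hj)) (fun i hi => hA i (hsub hi))
    refine RTriv.step _ (D.image e) ?_ ?_
    · rcases hr with ⟨j, rfl, hj, hAj, h⟩ | ⟨r, t, rfl, hr, ht, hrt, hArt, h⟩
      · refine Or.inl ⟨e j, by simp, Finset.mem_image_of_mem _ hj, by rw [hA j hj, hAj], ?_⟩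
        rcases h with h | h
        · left
          intro i hi
          obtain ⟨i, hi', rfl⟩ := Finset.mem_image.1 hi
          rw [hB i hi' j hj, h i hi']
        · right
          intro i hi
          obtain ⟨i, hi', rfl⟩ := Finset.mem_image.1 hi
          rw [hB i hi' j hj, h i hi', hA i hi']
      · refine Or.inr ⟨e r, e t, by simp [Finset.image_insert], Finset.mem_image_of_mem _ hr,
          Finset.mem_image_of_mem _ ht, fun h => hrt (he hr ht h), ?_, ?_⟩
        · rw [hA r hr, hA t ht, hArt]
        · intro i hi
          obtain ⟨i, hi', rfl⟩ := Finset.mem_image.1 hi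
          rw [hB i hi' r hr, hB i hi' t ht, h i hi', hA i hi']
    · convert ih using 1
      ext x
      simp only [Finset.mem_sdiff, Finset.mem_image]
      constructor
      · rintro ⟨⟨a, ha, rfl⟩, h2⟩
        exact ⟨a, ⟨ha, fun h => h2 ⟨a, h, rfl⟩⟩, rfl⟩
      · rintro ⟨a, ⟨ha, h⟩, rfl⟩
        refine ⟨⟨a, ha, rfl⟩, ?_⟩
        rintro ⟨b, hb, hba⟩
        exact h (he (hDS hb) ha hba ▸ hb)

/-- Two type 2 reductions sharing the index `r`. -/
lemma RTriv.swap {ι : Type} [DecidableEq ι] {B : ι → ι → ℤ} {A : ι → ℤ}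
    (hs : ∀ i j, B i j = - B j i) {S : Finset ι} {r t t' : ι}
    (ht : t ∈ S) (ht' : t' ∈ S) (hrt : r ≠ t) (hrt' : r ≠ t')
    (hA : A r = -A t) (hA' : A r = -A t')
    (h : ∀ i ∈ S, B i r + B i t = A i) (h' : ∀ i ∈ S, B i r + B i t' = A i)
    (H : RTriv B A (S \ {r, t'})) : RTriv B A (S \ {r, t}) := by
  by_cases htt : t = t'
  · subst htt; exact H
  let e : ι → ι := fun i => if i = t then t' else i
  have heS : ∀ i ∈ S, e i ∈ S := by
    intro i hi; by_cases hi' : i = t <;> simp [e, hi', ht', hi]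
  have hcol : ∀ x ∈ S, ∀ j, B x (e j) = B x j := by
    intro x hx j
    by_cases hj : j = t
    · simp only [e, hj, if_true]; linarith [h x hx, h' x hx]
    · simp [e, hj]
  have := RTriv.transfer (B' := B) (A' := A) e H ?_ ?_ ?_
  · convert this using 1
    ext x
    simp only [Finset.mem_sdiff, Finset.mem_image, Finset.mem_insert, Finset.mem_singleton, e]
    constructor
    · rintro ⟨hx, hx2⟩
      push Not at hx2
      by_cases hxt : x = t'
      · exact ⟨t, ⟨ht, by rintro (h | h); exacts [hrt h.symm, htt h]⟩, by simp [hxt]⟩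
      · exact ⟨x, ⟨hx, by rintro (h | h); exacts [hx2.1 h, hxt h]⟩, by simp [hx2.2]⟩
    · rintro ⟨a, ⟨ha, ha2⟩, rfl⟩
      push Not at ha2
      by_cases hat : a = t
      · simp [hat, ht', hrt'.symm, Ne.symm htt]
      · simp [hat, ha, ha2.1]
  · intro a ha b hb hab
    simp only [Finset.coe_sdiff, Set.mem_sdiff, Finset.mem_coe, Finset.mem_insert,
      Finset.mem_singleton] at ha hb
    simp only [e] at hab
    split_ifs at hab with h1 h2 h2
    · rw [h1, h2]
    · exact absurd (Or.inr hab.symm) hb.2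
    · exact absurd (Or.inr hab) ha.2
    · exact hab
  · intro i hi j hj
    have hi := (Finset.mem_sdiff.1 hi).1
    have hj := (Finset.mem_sdiff.1 hj).1
    rw [hcol _ (heS i hi), hs, hcol _ hj, ← hs]
  · intro i hi
    by_cases hit : i = t
    · simp only [e, hit, if_true]; linarith
    · simp [e, hit]

lemma RTriv.of_one {ι : Type} [DecidableEq ι] {B : ι → ι → ℤ} {A : ι → ℤ}
    {S : Finset ι} {j t : ι} (ht : t ∈ S) (hjt : j ≠ t)
    (hAj : A j = 0) (hj : (∀ i ∈ S, B i j = 0) ∨ (∀ i ∈ S, B i j = A i))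
    (hA : A j = -A t) (h : ∀ i ∈ S, B i j + B i t = A i) :
    RedSet B A (S \ {j}) {t} := by
  refine Or.inl ⟨t, rfl, by simp [ht, hjt.symm], by linarith, ?_⟩
  rcases hj with hj | hj
  · right
    intro i hi
    have hi := (Finset.mem_sdiff.1 hi).1
    linarith [hj i hi, h i hi]
  · left
    intro i hi
    have hi := (Finset.mem_sdiff.1 hi).1
    linarith [hj i hi, h i hi]

lemma sdiff_pair {ι : Type} [DecidableEq ι] (S : Finset ι) (j t : ι) :
    S \ {j, t} = (S \ {j}) \ {t} := by
  ext x; simp; tauto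

lemma RTriv.diamond {ι : Type} [DecidableEq ι] {B : ι → ι → ℤ} {A : ι → ℤ}
    (hs : ∀ i j, B i j = - B j i) (n : ℕ) : ∀ (S D : Finset ι), S.card = n →
    RTriv B A S → RedSet B A S D → RTriv B A (S \ D) := by
  induction n using Nat.strong_induction_on with
  | _ n ih =>
  intro S D hn hS hD
  have lt : ∀ E, E ⊆ S → E.Nonempty → (S \ E).card < n := by
    rintro E hE ⟨x, hx⟩
    rw [← hn]
    apply Finset.card_lt_card
    refine ⟨Finset.sdiff_subset, fun h => ?_⟩
    exact (Finset.mem_sdiff.1 (h (hE hx))).2 hx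
  cases hS with
  | nil => simpa using RTriv.nil
  | step _ D' hD' H =>
  by_cases hdis : Disjoint D D'
  · have h1 : RedSet B A (S \ D') D := hD.mono Finset.sdiff_subset
      (Finset.subset_sdiff.2 ⟨hD.sub.1, hdis⟩)
    have h2 : RedSet B A (S \ D) D' := hD'.mono Finset.sdiff_subset
      (Finset.subset_sdiff.2 ⟨hD'.sub.1, hdis.symm⟩)
    have h3 := ih _ (lt D' hD'.sub.1 hD'.sub.2) _ D rfl H h1
    refine RTriv.step _ D' h2 ?_
    rwa [sdiff_right_comm]
  have ltD' := lt D' hD'.sub.1 hD'.sub.2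
  rcases hD with ⟨j, rfl, hj, hAj, h⟩ | ⟨r, t, rfl, hr, ht, hrt, hA, h⟩ <;>
  rcases hD' with ⟨j', rfl, hj', hAj', h'⟩ | ⟨r', t', rfl, hr', ht', hrt', hA', h'⟩
  · have : j = j' := by simpa using hdis
    subst this; exact H
  · have : j = r' ∨ j = t' := by
      by_contra hc; apply hdis; simpa using hc
    rcases this with rfl | rfl
    · exact RTriv.step _ {t'} (RTriv.of_one ht' hrt' hAj h hA' h') (by rwa [← sdiff_pair])
    · refine RTriv.step _ {r'} (RTriv.of_one hr' hrt'.symm hAj h (by linarith)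
        fun i hi => by linarith [h' i hi]) ?_
      rwa [← sdiff_pair, Finset.pair_comm]
  · have : j' = r ∨ j' = t := by
      by_contra hc; apply hdis; rw [disjoint_comm]; simpa using hc
    rcases this with rfl | rfl
    · rw [sdiff_pair]
      exact ih _ ltD' _ _ rfl H (RTriv.of_one ht hrt hAj' h' hA h)
    · rw [Finset.pair_comm, sdiff_pair]
      exact ih _ ltD' _ _ rfl H (RTriv.of_one hr hrt.symm hAj' h' (by linarith)
        fun i hi => by linarith [h i hi])
  · have : (r = r' ∨ r = t') ∨ (t = r' ∨ t = t') := by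
      by_contra hc
      push Not at hc
      apply hdis
      rw [Finset.disjoint_left]
      intro x hx hx'
      simp only [Finset.mem_insert, Finset.mem_singleton] at hx hx'
      clear hrt hrt' h h' hA hA' hdis
      rcases hx with hx | hx <;> rcases hx' with hx' | hx' <;> grind
    have hc : ∀ i ∈ S, B i t + B i r = A i := fun i hi => by linarith [h i hi]
    have hc' : ∀ i ∈ S, B i t' + B i r' = A i := fun i hi => by linarith [h' i hi]
    have hAc : A t = -A r := by linarith
    have hAc' : A t' = -A r' := by linarith
    rcases this with (rfl | rfl) | (rfl | rfl)
    · exact RTriv.swap hs ht ht' hrt hrt' hA hA' h h' H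
    · rw [Finset.pair_comm] at H
      exact RTriv.swap hs ht hr' hrt hrt'.symm hA hAc' h hc' H
    · rw [Finset.pair_comm]
      exact RTriv.swap hs hr ht' hrt.symm hrt' hAc hA' hc h' H
    · rw [Finset.pair_comm]
      rw [Finset.pair_comm] at H
      exact RTriv.swap hs hr hr' hrt.symm hrt'.symm hAc hAc' hc hc' H

lemma RTriv.back {ι κ : Type} [DecidableEq ι] [DecidableEq κ] [Fintype ι]
    {B : ι → ι → ℤ} {A : ι → ℤ} {B' : κ → κ → ℤ} {A' : κ → ℤ} (e : ι → κ)
    (he : Function.Injective e) (h : RTriv B' A' (Finset.univ.image e))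
    (hB : ∀ i j, B i j = B' (e i) (e j)) (hA : ∀ i, A i = A' (e i)) :
    RTriv B A Finset.univ := by
  cases isEmpty_or_nonempty ι with
  | inl hi => rw [Finset.univ_eq_empty]; exact RTriv.nil
  | inr hi =>
    have hl := Function.leftInverse_invFun he
    have := RTriv.transfer (B' := B) (A' := A) (Function.invFun e) h ?_ ?_ ?_
    · convert this using 1
      ext x
      simp only [Finset.mem_univ, Finset.mem_image, true_and, exists_exists_eq_and, true_iff]
      exact ⟨x, hl x⟩
    · intro a ha b hb hab
      simp only [Finset.coe_image, Finset.coe_univ, Set.image_univ, Set.mem_range] at ha hb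
      obtain ⟨a, rfl⟩ := ha
      obtain ⟨b, rfl⟩ := hb
      rw [hl a, hl b] at hab
      rw [hab]
    · intro a ha b hb
      obtain ⟨a, -, rfl⟩ := Finset.mem_image.1 ha
      obtain ⟨b, -, rfl⟩ := Finset.mem_image.1 hb
      rw [hl a, hl b, hB]
    · intro a ha
      obtain ⟨a, -, rfl⟩ := Finset.mem_image.1 ha
      rw [hl a, hA]

/-- `M` reduces to the empty matrix by reductions only. -/
def RT (M : SkewAug) : Prop := RTriv (fun i j => M.B i j) M.A Finset.univ

lemma DeleteAt.image {M N : SkewAug} {D : Finset (Fin M.n)} {e : Fin N.n → Fin M.n}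
    (h : ∀ k, k ∈ Set.range e ↔ k ∉ (D : Set (Fin M.n))) :
    Finset.univ.image e = Finset.univ \ D := by
  ext x
  have := h x
  simpa using this

lemma RT.of_reduct {M N : SkewAug} (D : Finset (Fin M.n))
    (hr : RedSet (fun i j => M.B i j) M.A Finset.univ D) (h : DeleteAt M D N) :
    RT M ↔ RT N := by
  obtain ⟨e, he, hk, hB, hA⟩ := h
  have him := DeleteAt.image hk
  constructor
  · intro H
    have := RTriv.diamond (fun i j => skew_apply M i j) _ _ _ rfl H hr
    rw [← him] at this
    exact RTriv.back e he.injective this hB hA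
  · intro H
    refine RTriv.step _ D hr ?_
    rw [← him]
    exact RTriv.transfer e H he.injective.injOn (fun i _ j _ => (hB i j).symm)
      (fun i _ => (hA i).symm)

lemma RT.red1 {M N : SkewAug} (h : Red1 M N) : RT M ↔ RT N := by
  obtain ⟨j, ⟨h1, h2⟩, h⟩ := h
  exact RT.of_reduct {j} (Or.inl ⟨j, rfl, by simp, h1, by simpa using h2⟩) (by simpa using h)

lemma RT.red2 {M N : SkewAug} (h : Red2 M N) : RT M ↔ RT N := by
  obtain ⟨r, t, ⟨h0, h1, h2⟩, h⟩ := h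
  exact RT.of_reduct {r, t} (Or.inr ⟨r, t, rfl, by simp, by simp, h0, h1, by simpa using h2⟩)
    (by simpa using h)

lemma RT.perm {M N : SkewAug} (h : PermStep M N) (H : RT N) : RT M := by
  obtain ⟨hn, P, ⟨σ, rfl⟩, hB, hA⟩ := h
  have key : ∀ i k, permMatrixOf σ i k = if k = σ.symm i then 1 else 0 := by
    intro i k
    simp only [permMatrixOf, Matrix.of_apply, Equiv.eq_symm_apply]
  let e : Fin N.n → Fin M.n := fun i => Fin.cast hn.symm (σ.symm i)
  have he : Function.Bijective e := by
    exact (finCongr hn.symm).bijective.comp σ.symm.bijective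
  have := RTriv.transfer (B' := fun i j => M.B i j) (A' := M.A) e H he.injective.injOn ?_ ?_
  · rwa [Finset.image_univ_of_surjective he.surjective] at this
  · intro i _ j _
    rw [hB]
    simp [Matrix.mul_apply, key, e, Matrix.transpose_apply]
  · intro i _
    rw [hA]
    simp [Matrix.mulVec, dotProduct, key, e]

lemma RT.of_trivial {M : SkewAug} (h : Trivial M) : RT M := by
  unfold Trivial SEquiv at h
  induction h using Relation.ReflTransGen.head_induction_on with
  | refl => exact RTriv.nil
  | head h _ ih =>
    rcases h with h | h | h | h | h
    · exact RT.perm h ih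
    · exact (RT.red1 h).2 ih
    · exact (RT.red2 h).2 ih
    · exact (RT.red1 h).1 ih
    · exact (RT.red2 h).1 ih

end SkewAug

/-- An irreducible skew-symmetric augmented matrix of dimension
`n ≥ 1` is not trivial, i.e., not S-equivalent to the empty matrix. -/
theorem irreducible_not_trivial (M : SkewAug)
    (hM : SkewAug.Irreducible M) (hn : 1 ≤ M.n) :
    ¬ SkewAug.Trivial M := by
  intro h
  have H := SkewAug.RT.of_trivial h
  unfold SkewAug.RT at H
  generalize hS : (Finset.univ : Finset (Fin M.n)) = S at H
  cases H with
  | nil =>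
    have : (⟨0, hn⟩ : Fin M.n) ∈ (∅ : Finset (Fin M.n)) := hS ▸ Finset.mem_univ _
    simp at this
  | step _ D hr _ =>
    subst hS
    apply hM
    rcases hr with ⟨j, -, -, hA, h⟩ | ⟨r, t, -, -, -, hrt, hA, h⟩
    · exact Or.inl ⟨j, hA, by simpa using h⟩
    · exact Or.inr ⟨r, t, hrt, hA, by simpa using h⟩
end
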